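/- arXiv:1305.0353 — 2 statements merged into one kernel-verified Lean document; each statement's English description precedes it below -/
import Mathlib

section
/- If ψ is a non-constant function on V achieving the spectral gap, i.e. E_ν(ψ,ψ)/Var_π(ψ) = λ^G_{π,ν}, then ψ is monotonic: either ψ(i) ≤ ψ(i+1) for all 1 ≤ i < n, or ψ(i) ≥ ψ(i+1) for all 1 ≤ i < n. -/
/-!
Replace `ψ` by its running variation `φ i = ∑_{1 ≤ k < i} |ψ (k + 1) - ψ k|`. The increments along
the edges keep their absolute values, so `E_ν(φ, φ) = E_ν(ψ, ψ)`, while all the differences satisfy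
`|ψ i - ψ j| ≤ |φ i - φ j|`. Since `2 Var_π(f) = ∑_{i, j} π i π j (f i - f j)²`, the variance does
not decrease, and by minimality of `ψ` it cannot increase either. Hence `|ψ n - ψ 1|` equals the
total variation of `ψ`, which is the equality case of the triangle inequality: `ψ` is monotone.
-/

open Finset

/-- Dirichlet form on the path with vertices `{1,…,n}`;
`ν i` denotes the weight of edge `{i, i+1}`. -/
noncomputable def EForm (n : ℕ) (ν : ℕ → ℝ) (f g : ℕ → ℝ) : ℝ :=
  ∑ i ∈ Finset.Icc 1 (n - 1), (f i - f (i + 1)) * (g i - g (i + 1)) * ν i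

/-- Mean of `f` with respect to `π` on `{1,…,n}`. -/
noncomputable def piMean (n : ℕ) (π : ℕ → ℝ) (f : ℕ → ℝ) : ℝ :=
  ∑ i ∈ Finset.Icc 1 n, f i * π i

/-- Variance of `f` with respect to `π` on `{1,…,n}`. -/
noncomputable def varPi (n : ℕ) (π : ℕ → ℝ) (f : ℕ → ℝ) : ℝ :=
  piMean n π (fun i => (f i) ^ 2) - (piMean n π f) ^ 2

/-- `f` is non-constant on `{1,…,n}`. -/
def Nonconstant (n : ℕ) (f : ℕ → ℝ) : Prop :=
  ∃ i ∈ Finset.Icc 1 n, ∃ j ∈ Finset.Icc 1 n, f i ≠ f j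

/-- `lam` is the spectral gap: the minimum of the Rayleigh quotients over
non-constant functions. -/
def IsSpectralGap (n : ℕ) (π ν : ℕ → ℝ) (lam : ℝ) : Prop :=
  IsLeast {r : ℝ | ∃ f : ℕ → ℝ, Nonconstant n f ∧ r = EForm n ν f f / varPi n π f} lam

section Variation

theorem eq_left_of_monotoneOn_of_eq {α β : Type*} [Preorder α] [PartialOrder β] {g : α → β}
    {s : Set α} {a b x : α} (hg : MonotoneOn g s) (ha : a ∈ s) (hb : b ∈ s) (hab : g b = g a)
    (hx : x ∈ s ∩ Set.Icc a b) : g x = g a :=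
  le_antisymm (hab ▸ hg hx.1 hb hx.2.2) (hg ha hx.1 hx.2.1)

variable {α : Type*} [LinearOrder α]

theorem monotoneOn_or_antitoneOn_of_variationOnFromTo_eq_abs_sub {f : α → ℝ} {s : Set α}
    (hf : LocallyBoundedVariationOn f s) {a b : α} (ha : a ∈ s) (hb : b ∈ s)
    (hab : variationOnFromTo f s a b = |f b - f a|) :
    MonotoneOn f (s ∩ Set.Icc a b) ∨ AntitoneOn f (s ∩ Set.Icc a b) := by
  -- Writing `V` for the variation from `a`, either `V - f` or `V + f` takes the same value at `a`
  -- and at `b`; being monotone, it is then constant in between.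
  have hself : variationOnFromTo f s a a = 0 := variationOnFromTo.self f s a
  have hmono : MonotoneOn (variationOnFromTo f s a) (s ∩ Set.Icc a b) :=
    (variationOnFromTo.monotoneOn hf ha).mono Set.inter_subset_left
  rcases abs_cases (f b - f a) with ⟨habs, -⟩ | ⟨habs, -⟩
  · have hends : (variationOnFromTo f s a - f) b = (variationOnFromTo f s a - f) a := by
      simp only [Pi.sub_apply]; linarith
    have hconst : ∀ x ∈ s ∩ Set.Icc a b, variationOnFromTo f s a x - f x = -f a := fun x hx =>
      (eq_left_of_monotoneOn_of_eq (variationOnFromTo.sub_self_monotoneOn hf ha) ha hb hends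
        hx).trans (by simp only [Pi.sub_apply, hself, zero_sub])
    exact .inl fun x hx y hy hxy => by linarith [hconst x hx, hconst y hy, hmono hx hy hxy]
  · have hends : (variationOnFromTo f s a + f) b = (variationOnFromTo f s a + f) a := by
      simp only [Pi.add_apply]; linarith
    have hconst : ∀ x ∈ s ∩ Set.Icc a b, variationOnFromTo f s a x + f x = f a := fun x hx =>
      (eq_left_of_monotoneOn_of_eq (variationOnFromTo.add_self_monotoneOn hf ha) ha hb hends
        hx).trans (by simp only [Pi.add_apply, hself, zero_add])
    exact .inr fun x hx y hy hxy => by linarith [hconst x hx, hconst y hy, hmono hx hy hxy]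

theorem abs_sub_le_abs_variationOnFromTo_sub {f : α → ℝ} {s : Set α}
    (hf : LocallyBoundedVariationOn f s) {a b c : α} (ha : a ∈ s) (hb : b ∈ s) (hc : c ∈ s) :
    |f b - f c| ≤ |variationOnFromTo f s a b - variationOnFromTo f s a c| := by
  wlog hcb : c ≤ b generalizing b c
  · simpa only [abs_sub_comm] using this hc hb (le_of_not_ge hcb)
  · exact (variationOnFromTo.abs_sub_le_sub_of_le hf ha hc hb hcb).trans (le_abs_self _)

theorem locallyBoundedVariationOn_of_locallyFiniteOrder [LocallyFiniteOrder α] {E : Type*}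
    [PseudoMetricSpace E] (f : α → E) (s : Set α) : LocallyBoundedVariationOn f s :=
  fun a b _ _ =>
    have := ((Set.finite_Icc a b).inter_of_right s).to_subtype
    BoundedVariationOn.of_finite f (s ∩ Set.Icc a b)

theorem variationOnFromTo_univ_of_covBy {E : Type*} [PseudoMetricSpace E] (f : α → E) {a b : α}
    (hab : a ⋖ b) : variationOnFromTo f Set.univ a b = dist (f a) (f b) := by
  rw [variationOnFromTo.eq_of_le f Set.univ hab.le, Set.univ_inter, hab.Icc_eq, eVariationOn.pair,
    dist_edist]

end Variation

section DirichletForm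

variable {n : ℕ} {ν f g : ℕ → ℝ}

theorem eForm_self_congr
    (h : ∀ i ∈ Icc 1 (n - 1), |f i - f (i + 1)| = |g i - g (i + 1)|) :
    EForm n ν f f = EForm n ν g g :=
  sum_congr rfl fun i hi => by
    rw [← abs_mul_abs_self (f i - f (i + 1)), h i hi, abs_mul_abs_self]

theorem eForm_self_variationOnFromTo (n a : ℕ) (ν f : ℕ → ℝ) :
    EForm n ν (variationOnFromTo f Set.univ a) (variationOnFromTo f Set.univ a) =
      EForm n ν f f := by
  refine eForm_self_congr fun i _ => ?_
  rw [variationOnFromTo.sub_right (locallyBoundedVariationOn_of_locallyFiniteOrder f _)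
      (Set.mem_univ _) (Set.mem_univ _) (Set.mem_univ _), variationOnFromTo.eq_neg_swap, abs_neg,
    variationOnFromTo_univ_of_covBy f (Order.covBy_add_one i), abs_dist, Real.dist_eq]

theorem Nonconstant.exists_ne_succ (hf : Nonconstant n f) :
    ∃ i ∈ Icc 1 (n - 1), f i ≠ f (i + 1) := by
  by_contra! hsucc
  have hconst : ∀ i, 1 ≤ i → i ≤ n → f i = f 1 := fun i hi =>
    Nat.le_induction (fun _ => rfl)
      (fun k hk ih hkn => (hsucc k (mem_Icc.2 ⟨hk, by omega⟩)).symm.trans (ih (by omega))) i hi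
  obtain ⟨i, hi, j, hj, hij⟩ := hf
  rw [mem_Icc] at hi hj
  exact hij ((hconst i hi.1 hi.2).trans (hconst j hj.1 hj.2).symm)

theorem Nonconstant.of_abs_sub_le (hf : Nonconstant n f)
    (hfg : ∀ i ∈ Icc 1 n, ∀ j ∈ Icc 1 n, |f i - f j| ≤ |g i - g j|) : Nonconstant n g := by
  obtain ⟨i, hi, j, hj, hij⟩ := hf
  exact ⟨i, hi, j, hj, sub_ne_zero.1 <| abs_pos.1 <|
    (abs_pos.2 (sub_ne_zero.2 hij)).trans_le (hfg i hi j hj)⟩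

theorem Nonconstant.eForm_self_pos (hf : Nonconstant n f) (hν : ∀ i ∈ Icc 1 (n - 1), 0 < ν i) :
    0 < EForm n ν f f := by
  obtain ⟨k, hk, hne⟩ := hf.exists_ne_succ
  exact sum_pos' (fun i hi => mul_nonneg (mul_self_nonneg _) (hν i hi).le)
    ⟨k, hk, mul_pos (mul_self_pos.2 (sub_ne_zero.2 hne)) (hν k hk)⟩

end DirichletForm

section Variance

theorem sum_sum_mul_sub_sq {ι R : Type*} [CommRing R] (s : Finset ι) (w f : ι → R) :
    ∑ i ∈ s, ∑ j ∈ s, w i * w j * (f i - f j) ^ 2 =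
      2 * ((∑ i ∈ s, w i) * ∑ i ∈ s, f i ^ 2 * w i - (∑ i ∈ s, f i * w i) ^ 2) := by
  have hexpand : ∀ i j, w i * w j * (f i - f j) ^ 2 =
      f i ^ 2 * w i * w j + w i * (f j ^ 2 * w j) - 2 * (f i * w i * (f j * w j)) := by
    intro i j; ring
  simp only [hexpand, sum_sub_distrib, sum_add_distrib, ← mul_sum, ← sum_mul]
  ring

variable {n : ℕ} {π f g : ℕ → ℝ}

theorem sum_sum_mul_sub_sq_eq_two_mul_varPi (hπ1 : ∑ i ∈ Icc 1 n, π i = 1) (f : ℕ → ℝ) :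
    ∑ i ∈ Icc 1 n, ∑ j ∈ Icc 1 n, π i * π j * (f i - f j) ^ 2 = 2 * varPi n π f := by
  rw [sum_sum_mul_sub_sq, hπ1, one_mul, varPi, piMean, piMean]

theorem varPi_lt_varPi (hπ : ∀ i ∈ Icc 1 n, 0 < π i) (hπ1 : ∑ i ∈ Icc 1 n, π i = 1)
    (hle : ∀ i ∈ Icc 1 n, ∀ j ∈ Icc 1 n, |f i - f j| ≤ |g i - g j|)
    (hlt : ∃ i ∈ Icc 1 n, ∃ j ∈ Icc 1 n, |f i - f j| < |g i - g j|) :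
    varPi n π f < varPi n π g := by
  obtain ⟨a, ha, b, hb, hab⟩ := hlt
  have hterm : ∀ i ∈ Icc 1 n, ∀ j ∈ Icc 1 n,
      π i * π j * (f i - f j) ^ 2 ≤ π i * π j * (g i - g j) ^ 2 := fun i hi j hj =>
    mul_le_mul_of_nonneg_left (sq_le_sq.2 (hle i hi j hj)) (mul_pos (hπ i hi) (hπ j hj)).le
  have hterm_ab : π a * π b * (f a - f b) ^ 2 < π a * π b * (g a - g b) ^ 2 :=
    mul_lt_mul_of_pos_left (sq_lt_sq.2 hab) (mul_pos (hπ a ha) (hπ b hb))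
  have hsum : ∑ i ∈ Icc 1 n, ∑ j ∈ Icc 1 n, π i * π j * (f i - f j) ^ 2 <
      ∑ i ∈ Icc 1 n, ∑ j ∈ Icc 1 n, π i * π j * (g i - g j) ^ 2 :=
    sum_lt_sum (fun i hi => sum_le_sum (hterm i hi))
      ⟨a, ha, sum_lt_sum (hterm a ha) ⟨b, hb, hterm_ab⟩⟩
  rw [sum_sum_mul_sub_sq_eq_two_mul_varPi hπ1, sum_sum_mul_sub_sq_eq_two_mul_varPi hπ1] at hsum
  exact lt_of_mul_lt_mul_left hsum zero_le_two

theorem Nonconstant.varPi_pos (hf : Nonconstant n f) (hπ : ∀ i ∈ Icc 1 n, 0 < π i)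
    (hπ1 : ∑ i ∈ Icc 1 n, π i = 1) : 0 < varPi n π f := by
  obtain ⟨i, hi, j, hj, hij⟩ := hf
  have hzero : varPi n π 0 = 0 := by simp [varPi, piMean]
  rw [← hzero]
  exact varPi_lt_varPi hπ hπ1 (fun _ _ _ _ => by simp)
    ⟨i, hi, j, hj, by simpa using sub_ne_zero.2 hij⟩

theorem IsSpectralGap.varPi_le_varPi {ν : ℕ → ℝ} {gap : ℝ} (hgap : IsSpectralGap n π ν gap)
    (hπ : ∀ i ∈ Icc 1 n, 0 < π i) (hπ1 : ∑ i ∈ Icc 1 n, π i = 1)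
    (hν : ∀ i ∈ Icc 1 (n - 1), 0 < ν i) (hf : Nonconstant n f) (hg : Nonconstant n g)
    (hmin : EForm n ν f f / varPi n π f = gap) (hE : EForm n ν g g ≤ EForm n ν f f) :
    varPi n π g ≤ varPi n π f := by
  have hfpos : 0 < varPi n π f := hf.varPi_pos hπ hπ1
  have hgpos : 0 < varPi n π g := hg.varPi_pos hπ hπ1
  refine (div_le_div_iff_of_pos_left (hf.eForm_self_pos hν) hfpos hgpos).1 ?_
  calc EForm n ν f f / varPi n π f = gap := hmin
    _ ≤ EForm n ν g g / varPi n π g := hgap.2 ⟨g, hg, rfl⟩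
    _ ≤ EForm n ν f f / varPi n π g := div_le_div_of_nonneg_right hE hgpos.le

theorem IsSpectralGap.abs_sub_eq_abs_sub {ν : ℕ → ℝ} {gap : ℝ} (hgap : IsSpectralGap n π ν gap)
    (hπ : ∀ i ∈ Icc 1 n, 0 < π i) (hπ1 : ∑ i ∈ Icc 1 n, π i = 1)
    (hν : ∀ i ∈ Icc 1 (n - 1), 0 < ν i) (hf : Nonconstant n f)
    (hmin : EForm n ν f f / varPi n π f = gap) (hE : EForm n ν g g ≤ EForm n ν f f)
    (hfg : ∀ i ∈ Icc 1 n, ∀ j ∈ Icc 1 n, |f i - f j| ≤ |g i - g j|)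
    {i j : ℕ} (hi : i ∈ Icc 1 n) (hj : j ∈ Icc 1 n) : |f i - f j| = |g i - g j| := by
  by_contra hne
  have hvar_lt : varPi n π f < varPi n π g :=
    varPi_lt_varPi hπ hπ1 hfg ⟨i, hi, j, hj, (hfg i hi j hj).lt_of_ne hne⟩
  exact hvar_lt.not_ge (hgap.varPi_le_varPi hπ hπ1 hν hf (hf.of_abs_sub_le hfg) hmin hE)

end Variance

theorem stmt0 (n : ℕ) (hn : 2 ≤ n) (π ν : ℕ → ℝ)
    (hπ : ∀ i ∈ Finset.Icc 1 n, 0 < π i)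
    (hπ1 : ∑ i ∈ Finset.Icc 1 n, π i = 1)
    (hν : ∀ i ∈ Finset.Icc 1 (n - 1), 0 < ν i)
    (hν0 : ν 0 = 0) (hνn : ν n = 0)
    (gap : ℝ) (hgap : IsSpectralGap n π ν gap)
    (ψ : ℕ → ℝ) (hψ : Nonconstant n ψ)
    (hmin : EForm n ν ψ ψ / varPi n π ψ = gap) :
    (∀ i, 1 ≤ i → i < n → ψ i ≤ ψ (i + 1)) ∨
    (∀ i, 1 ≤ i → i < n → ψ (i + 1) ≤ ψ i) := by
  have hbv : LocallyBoundedVariationOn ψ Set.univ :=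
    locallyBoundedVariationOn_of_locallyFiniteOrder ψ _
  let φ : ℕ → ℝ := variationOnFromTo ψ Set.univ 1
  have hE : EForm n ν φ φ = EForm n ν ψ ψ := eForm_self_variationOnFromTo n 1 ν ψ
  have hdiff (i j : ℕ) : |ψ i - ψ j| ≤ |φ i - φ j| :=
    abs_sub_le_abs_variationOnFromTo_sub hbv (Set.mem_univ _) (Set.mem_univ _) (Set.mem_univ _)
  have hends : |ψ n - ψ 1| = |φ n - φ 1| :=
    hgap.abs_sub_eq_abs_sub hπ hπ1 hν hψ hmin hE.le (fun i _ j _ => hdiff i j)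
      (right_mem_Icc.2 (by omega)) (left_mem_Icc.2 (by omega))
  have htotal : φ n = |ψ n - ψ 1| := by
    rw [hends, show φ 1 = 0 from variationOnFromTo.self .., sub_zero,
      abs_of_nonneg (variationOnFromTo.nonneg_of_le ψ _ (by omega))]
  refine (monotoneOn_or_antitoneOn_of_variationOnFromTo_eq_abs_sub hbv (Set.mem_univ _)
    (Set.mem_univ _) htotal).imp (fun hmono i hi hin => ?_) (fun hanti i hi hin => ?_)
  · exact hmono ⟨trivial, hi, hin.le⟩ ⟨trivial, by omega, hin⟩ i.le_succ
  · exact hanti ⟨trivial, hi, hin.le⟩ ⟨trivial, by omega, hin⟩ i.le_succ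
end

section
/- There exists a constant σ ∈ (0,1), depending only on n, π and ν (in particular independent of the choice of λ_0 and a), such that 0 ≤ λ_k − λ^G_{π,ν} ≤ σ^{k−1} λ_1 for all k ≥ 1. -/
open Finset

/-- The positive-part recursion with parameter `lam`:
`ψ(i+1) = ψ(i) + max{[ψ(i)−ψ(i−1)]ν(i−1,i) − λ π(i) ψ(i), 0}/ν(i,i+1)` for `1 ≤ i < n`. -/
def PosPartRec (n : ℕ) (π ν : ℕ → ℝ) (lam : ℝ) (ψ : ℕ → ℝ) : Prop :=
  ∀ i, 1 ≤ i → i < n →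
    ψ (i + 1) = ψ i + max ((ψ i - ψ (i - 1)) * ν (i - 1) - lam * (π i * ψ i)) 0 / ν i

/-!
Write `λ` for the parameter, `ψ` for the output of the recursion, and `M = π(ψ)`. By summation by
parts, for every `g`,
`E(ψ, g) = λ (Cov(ψ, g) − M (g(n) − π(g))) + ∑ᵢ Rᵢ (g(i+1) − g(i))`,
where `Rᵢ = (ψ(i+1) − ψ(i)) ν(i,i+1) + λ ∑_{l ≤ i} π(l) ψ(l)` measures the truncations made up to
`i`. It satisfies `Rᵢ ≥ 0`, and `ψ(i+1) = ψ(i)` wherever `Rᵢ ≠ 0`. Two choices of `g` matter.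

* `g = ψ`: the last sum vanishes, so the next parameter is `λ − λ M (ψ(n) − M) / Var(ψ)`.
* `g = φ`, a nondecreasing minimizer of the Rayleigh quotient: `E(ψ, φ) = gap · Cov(ψ, φ)` and the
  last sum is nonnegative, so `λ M (φ(n) − π(φ)) ≥ (λ − gap) Cov(ψ, φ)`. As `φ` and `ψ` are
  nondecreasing, `Cov(ψ, φ) ≥ π(1) π(n) (ψ(n) − ψ(1)) (φ(n) − π(φ))`, and therefore
  `λ M ≥ π(1) π(n) (λ − gap) (ψ(n) − ψ(1))`.

Since `Var(ψ) ≤ (ψ(n) − M) (M − ψ(1))`, together these contract `λ − gap` by the factor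
`σ = 1 − π(1) π(n)`.
-/

section WeightedCov

variable {ι : Type*} {s : Finset ι} {w f g : ι → ℝ}

/-- The covariance of `f` and `g` on the finite set `s` under the weights `w`, provided these
have total mass one. -/
noncomputable def weightedCov (s : Finset ι) (w f g : ι → ℝ) : ℝ :=
  ∑ i ∈ s, f i * g i * w i - (∑ i ∈ s, f i * w i) * ∑ i ∈ s, g i * w i

lemma weightedCov_comm (s : Finset ι) (w f g : ι → ℝ) :
    weightedCov s w f g = weightedCov s w g f := by
  simp only [weightedCov, mul_comm]

lemma weightedCov_add_left (s : Finset ι) (w f₁ f₂ g : ι → ℝ) :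
    weightedCov s w (f₁ + f₂) g = weightedCov s w f₁ g + weightedCov s w f₂ g := by
  simp only [weightedCov, Pi.add_apply, add_mul, sum_add_distrib]
  ring

lemma weightedCov_smul_left (s : Finset ι) (w f g : ι → ℝ) (c : ℝ) :
    weightedCov s w (c • f) g = c * weightedCov s w f g := by
  simp only [weightedCov, Pi.smul_apply, smul_eq_mul, mul_assoc, ← mul_sum]
  ring

lemma weightedMean_mem_Icc {a b : ℝ} (hw : ∀ i ∈ s, 0 ≤ w i) (hw1 : ∑ i ∈ s, w i = 1)
    (hf : ∀ i ∈ s, f i ∈ Set.Icc a b) : ∑ i ∈ s, f i * w i ∈ Set.Icc a b := by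
  simpa only [smul_eq_mul, mul_comm] using (convex_Icc a b).sum_mem hw hw1 hf

lemma mul_lt_one_of_sum_eq_one {i j : ι} (hw : ∀ i ∈ s, 0 < w i) (hw1 : ∑ i ∈ s, w i = 1)
    (hi : i ∈ s) (hj : j ∈ s) (hij : i ≠ j) : w i * w j < 1 := by
  have lt_one {k l : ι} (hk : k ∈ s) (hl : l ∈ s) (hkl : k ≠ l) : w k < 1 :=
    hw1 ▸ single_lt_sum hkl.symm hk hl (hw l hl) fun m hm _ => (hw m hm).le
  exact mul_lt_one_of_nonneg_of_lt_one_left (hw i hi).le (lt_one hi hj hij)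
    (lt_one hj hi hij.symm).le

lemma two_mul_weightedCov (hw1 : ∑ i ∈ s, w i = 1) :
    2 * weightedCov s w f g =
      ∑ i ∈ s, ∑ j ∈ s, (f i - f j) * (g i - g j) * (w i * w j) := by
  have expand (i j : ι) : (f i - f j) * (g i - g j) * (w i * w j) =
      f i * g i * w i * w j - f i * w i * (g j * w j)
        - g i * w i * (f j * w j) + w i * (f j * g j * w j) := by ring
  simp only [expand, sum_add_distrib, sum_sub_distrib, ← mul_sum, ← sum_mul, hw1, weightedCov]
  ring

lemma mul_le_weightedCov_of_monovaryOn (hw : ∀ i ∈ s, 0 ≤ w i) (hw1 : ∑ i ∈ s, w i = 1)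
    (hfg : MonovaryOn f g s) {i j : ι} (hi : i ∈ s) (hj : j ∈ s) :
    (f i - f j) * (g i - g j) * (w i * w j) ≤ weightedCov s w f g := by
  let F (x : ι × ι) : ℝ := (f x.1 - f x.2) * (g x.1 - g x.2) * (w x.1 * w x.2)
  have hF : ∀ x ∈ s ×ˢ s, 0 ≤ F x := fun x hx => by
    obtain ⟨h1, h2⟩ := mem_product.1 hx
    exact mul_nonneg (hfg.sub_mul_sub_nonneg h2 h1) (mul_nonneg (hw _ h1) (hw _ h2))
  have hsum : 2 * weightedCov s w f g = ∑ x ∈ s ×ˢ s, F x := by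
    rw [two_mul_weightedCov hw1, sum_product]
  obtain rfl | hij := eq_or_ne i j
  · rw [sub_self, zero_mul, zero_mul]
    linarith [sum_nonneg hF]
  have hpair : F (i, j) + F (j, i) ≤ 2 * weightedCov s w f g := by
    classical
    rw [hsum, ← sum_pair (by simp [hij])]
    refine sum_le_sum_of_subset_of_nonneg ?_ fun x hx _ => hF x hx
    simp [insert_subset_iff, hi, hj]
  have hsymm : F (j, i) = F (i, j) := by simp only [F]; ring
  rw [hsymm] at hpair
  linarith

lemma weightedCov_self_le_of_abs_sub_le (hw : ∀ i ∈ s, 0 ≤ w i) (hw1 : ∑ i ∈ s, w i = 1)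
    (hfg : ∀ i ∈ s, ∀ j ∈ s, |f i - f j| ≤ |g i - g j|) :
    weightedCov s w f f ≤ weightedCov s w g g := by
  suffices 2 * weightedCov s w f f ≤ 2 * weightedCov s w g g by linarith
  rw [two_mul_weightedCov hw1, two_mul_weightedCov hw1]
  refine sum_le_sum fun i hi => sum_le_sum fun j hj => ?_
  exact mul_le_mul_of_nonneg_right (abs_le_iff_mul_self_le.1 (hfg i hi j hj))
    (mul_nonneg (hw i hi) (hw j hj))

lemma weightedCov_self_pos_iff (hw : ∀ i ∈ s, 0 < w i) (hw1 : ∑ i ∈ s, w i = 1) :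
    0 < weightedCov s w f f ↔ ∃ i ∈ s, ∃ j ∈ s, f i ≠ f j := by
  constructor
  · contrapose!
    intro hconst
    have hzero : 2 * weightedCov s w f f = 0 := by
      rw [two_mul_weightedCov hw1]
      exact sum_eq_zero fun i hi => sum_eq_zero fun j hj => by rw [hconst i hi j hj]; ring
    linarith
  · rintro ⟨i, hi, j, hj, hij⟩
    refine lt_of_lt_of_le ?_ (mul_le_weightedCov_of_monovaryOn (fun i hi => (hw i hi).le) hw1
      (monovaryOn_self f s) hi hj)
    exact mul_pos (mul_self_pos.2 (sub_ne_zero.2 hij)) (mul_pos (hw i hi) (hw j hj))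

/- The Bhatia–Davis inequality: the difference of the two sides is the mean of the nonnegative
function `(b - f) * (f - a)`. -/
lemma weightedCov_self_le_mul {a b : ℝ} (hw : ∀ i ∈ s, 0 ≤ w i) (hw1 : ∑ i ∈ s, w i = 1)
    (hf : ∀ i ∈ s, f i ∈ Set.Icc a b) :
    weightedCov s w f f ≤ (b - ∑ i ∈ s, f i * w i) * (∑ i ∈ s, f i * w i - a) := by
  have hmean : 0 ≤ ∑ i ∈ s, (b - f i) * (f i - a) * w i := sum_nonneg fun i hi =>
    mul_nonneg (mul_nonneg (sub_nonneg.2 (hf i hi).2) (sub_nonneg.2 (hf i hi).1)) (hw i hi)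
  have expand (i : ι) : (b - f i) * (f i - a) * w i =
      (a + b) * (f i * w i) - f i * f i * w i - a * b * w i := by ring
  simp only [expand, sum_sub_distrib, ← mul_sum, hw1] at hmean
  rw [weightedCov]
  linarith

end WeightedCov

section SpectralGap

variable {n : ℕ} {π ν f φ : ℕ → ℝ} {gap : ℝ}

lemma varPi_eq_weightedCov (n : ℕ) (π f : ℕ → ℝ) :
    varPi n π f = weightedCov (Icc 1 n) π f f := by
  simp only [varPi, piMean, weightedCov, sq]

lemma varPi_pos_iff (hπ : ∀ i ∈ Icc 1 n, 0 < π i) (hπ1 : ∑ i ∈ Icc 1 n, π i = 1) :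
    0 < varPi n π f ↔ Nonconstant n f := by
  rw [varPi_eq_weightedCov, weightedCov_self_pos_iff hπ hπ1, Nonconstant]

lemma EForm_self_nonneg (hν : ∀ i ∈ Icc 1 (n - 1), 0 ≤ ν i) : 0 ≤ EForm n ν f f :=
  sum_nonneg fun i hi => mul_nonneg (mul_self_nonneg _) (hν i hi)

lemma EForm_self_pos (hν : ∀ i ∈ Icc 1 (n - 1), 0 < ν i) {i : ℕ} (hi : i ∈ Icc 1 (n - 1))
    (hfi : f i ≠ f (i + 1)) : 0 < EForm n ν f f :=
  sum_pos' (fun j hj => mul_nonneg (mul_self_nonneg _) (hν j hj).le)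
    ⟨i, hi, mul_pos (mul_self_pos.2 (sub_ne_zero.2 hfi)) (hν i hi)⟩

lemma IsSpectralGap.nonneg (hgap : IsSpectralGap n π ν gap) (hπ : ∀ i ∈ Icc 1 n, 0 < π i)
    (hπ1 : ∑ i ∈ Icc 1 n, π i = 1) (hν : ∀ i ∈ Icc 1 (n - 1), 0 ≤ ν i) : 0 ≤ gap := by
  obtain ⟨f, hf, rfl⟩ := hgap.1
  exact div_nonneg (EForm_self_nonneg hν) ((varPi_pos_iff hπ hπ1).2 hf).le

lemma IsSpectralGap.mul_varPi_le (hgap : IsSpectralGap n π ν gap)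
    (hπ : ∀ i ∈ Icc 1 n, 0 < π i) (hπ1 : ∑ i ∈ Icc 1 n, π i = 1)
    (hν : ∀ i ∈ Icc 1 (n - 1), 0 ≤ ν i) (f : ℕ → ℝ) : gap * varPi n π f ≤ EForm n ν f f := by
  by_cases hvar : 0 < varPi n π f
  · exact (le_div_iff₀ hvar).1 (hgap.2 ⟨f, (varPi_pos_iff hπ hπ1).1 hvar, rfl⟩)
  · exact (mul_nonpos_of_nonneg_of_nonpos (hgap.nonneg hπ hπ1 hν) (not_lt.1 hvar)).trans
      (EForm_self_nonneg hν)

lemma EForm_comm (n : ℕ) (ν f g : ℕ → ℝ) : EForm n ν f g = EForm n ν g f :=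
  sum_congr rfl fun _ _ => by ring

lemma EForm_add_left (n : ℕ) (ν f₁ f₂ g : ℕ → ℝ) :
    EForm n ν (f₁ + f₂) g = EForm n ν f₁ g + EForm n ν f₂ g := by
  simp only [EForm, Pi.add_apply, add_sub_add_comm, add_mul, sum_add_distrib]

lemma EForm_smul_left (n : ℕ) (ν f g : ℕ → ℝ) (c : ℝ) :
    EForm n ν (c • f) g = c * EForm n ν f g := by
  simp only [EForm, Pi.smul_apply, smul_eq_mul, ← mul_sub, mul_assoc, ← mul_sum]

/-- The symmetric bilinear form `E(f, g) − gap · Cov(f, g)`. The spectral gap makes it positive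
semidefinite, with the minimizers of the Rayleigh quotient as null vectors. -/
noncomputable def gapForm (n : ℕ) (π ν : ℕ → ℝ) (gap : ℝ) : LinearMap.BilinForm ℝ (ℕ → ℝ) :=
  LinearMap.mk₂ ℝ (fun f g => EForm n ν f g - gap * weightedCov (Icc 1 n) π f g)
    (fun f₁ f₂ g => by
      rw [EForm_add_left, weightedCov_add_left]
      ring)
    (fun c f g => by
      rw [EForm_smul_left, weightedCov_smul_left, smul_eq_mul]
      ring)
    (fun f g₁ g₂ => by
      simp only [EForm_comm n ν f, weightedCov_comm _ π f, EForm_add_left, weightedCov_add_left]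
      ring)
    (fun c f g => by
      simp only [EForm_comm n ν f, weightedCov_comm _ π f, EForm_smul_left, weightedCov_smul_left,
        smul_eq_mul]
      ring)

lemma gapForm_apply (n : ℕ) (π ν f g : ℕ → ℝ) (gap : ℝ) :
    gapForm n π ν gap f g = EForm n ν f g - gap * weightedCov (Icc 1 n) π f g :=
  rfl

lemma gapForm_self (n : ℕ) (π ν f : ℕ → ℝ) (gap : ℝ) :
    gapForm n π ν gap f f = EForm n ν f f - gap * varPi n π f := by
  rw [gapForm_apply, varPi_eq_weightedCov]

lemma gapForm_isSymm (n : ℕ) (π ν : ℕ → ℝ) (gap : ℝ) : (gapForm n π ν gap).IsSymm where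
  eq f g := by
    rw [gapForm_apply, gapForm_apply, EForm_comm, weightedCov_comm]

lemma IsSpectralGap.EForm_eq_mul_weightedCov (hgap : IsSpectralGap n π ν gap)
    (hπ : ∀ i ∈ Icc 1 n, 0 < π i) (hπ1 : ∑ i ∈ Icc 1 n, π i = 1)
    (hν : ∀ i ∈ Icc 1 (n - 1), 0 ≤ ν i) (hφ : EForm n ν φ φ = gap * varPi n π φ) (g : ℕ → ℝ) :
    EForm n ν g φ = gap * weightedCov (Icc 1 n) π g φ := by
  have hnonneg (f : ℕ → ℝ) : 0 ≤ gapForm n π ν gap f f := by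
    rw [gapForm_self]
    exact sub_nonneg.2 (hgap.mul_varPi_le hπ hπ1 hν f)
  have hnull : gapForm n π ν gap φ φ = 0 := by
    rw [gapForm_self, hφ, sub_self]
  have hker := (LinearMap.BilinForm.apply_apply_same_eq_zero_iff _ hnonneg
    (LinearMap.BilinForm.isSymm_iff.1 (gapForm_isSymm n π ν gap))).1 hnull
  have hsymm : gapForm n π ν gap g φ = gapForm n π ν gap φ g :=
    (gapForm_isSymm n π ν gap).eq g φ
  rw [LinearMap.mem_ker.1 hker, LinearMap.zero_apply, gapForm_apply] at hsymm
  exact sub_eq_zero.1 hsymm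

/-- The total variation of `f` on `{0,…,i}`, as a function of `i`: the nondecreasing function with
the same absolute increments as `f`. -/
noncomputable def cumVariation (f : ℕ → ℝ) (i : ℕ) : ℝ := ∑ l ∈ range i, |f l - f (l + 1)|

lemma cumVariation_succ (f : ℕ → ℝ) (i : ℕ) :
    cumVariation f (i + 1) = cumVariation f i + |f i - f (i + 1)| :=
  sum_range_succ _ _

lemma cumVariation_monotone (f : ℕ → ℝ) : Monotone (cumVariation f) :=
  monotone_nat_of_le_succ fun i => by
    rw [cumVariation_succ]
    exact le_add_of_nonneg_right (abs_nonneg _)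

lemma abs_sub_le_abs_cumVariation_sub (f : ℕ → ℝ) (i j : ℕ) :
    |f i - f j| ≤ |cumVariation f i - cumVariation f j| := by
  wlog hij : i ≤ j generalizing i j
  · rw [abs_sub_comm, abs_sub_comm (cumVariation f i)]
    exact this j i (le_of_not_ge hij)
  calc |f i - f j| ≤ ∑ l ∈ Ico i j, |f l - f (l + 1)| := dist_le_Ico_sum_dist f hij
    _ = cumVariation f j - cumVariation f i := sum_Ico_eq_sub _ hij
    _ ≤ |cumVariation f i - cumVariation f j| := by
      rw [abs_sub_comm]
      exact le_abs_self _

lemma EForm_cumVariation (n : ℕ) (ν f : ℕ → ℝ) :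
    EForm n ν (cumVariation f) (cumVariation f) = EForm n ν f f := by
  refine sum_congr rfl fun i _ => ?_
  rw [cumVariation_succ, sub_add_cancel_left, neg_mul_neg, abs_mul_abs_self]

lemma varPi_le_varPi_cumVariation (hπ : ∀ i ∈ Icc 1 n, 0 ≤ π i) (hπ1 : ∑ i ∈ Icc 1 n, π i = 1) :
    varPi n π f ≤ varPi n π (cumVariation f) := by
  simp only [varPi_eq_weightedCov]
  exact weightedCov_self_le_of_abs_sub_le hπ hπ1 fun i _ j _ =>
    abs_sub_le_abs_cumVariation_sub f i j

lemma IsSpectralGap.exists_monotone_minimizer (hgap : IsSpectralGap n π ν gap)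
    (hπ : ∀ i ∈ Icc 1 n, 0 < π i) (hπ1 : ∑ i ∈ Icc 1 n, π i = 1)
    (hν : ∀ i ∈ Icc 1 (n - 1), 0 ≤ ν i) :
    ∃ φ, Monotone φ ∧ 0 < varPi n π φ ∧ EForm n ν φ φ = gap * varPi n π φ := by
  obtain ⟨f, hf, hquot⟩ := hgap.1
  have hvar : 0 < varPi n π f := (varPi_pos_iff hπ hπ1).2 hf
  have hle : varPi n π f ≤ varPi n π (cumVariation f) :=
    varPi_le_varPi_cumVariation (fun i hi => (hπ i hi).le) hπ1
  refine ⟨cumVariation f, cumVariation_monotone f, hvar.trans_le hle, le_antisymm ?_ ?_⟩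
  · calc EForm n ν (cumVariation f) (cumVariation f) = gap * varPi n π f := by
          rw [EForm_cumVariation, hquot, div_mul_cancel₀ _ hvar.ne']
      _ ≤ gap * varPi n π (cumVariation f) :=
          mul_le_mul_of_nonneg_left hle (hgap.nonneg hπ hπ1 hν)
  · exact hgap.mul_varPi_le hπ hπ1 hν _

end SpectralGap

section FluxDefect

/-- The flux `(ψ(i+1) − ψ(i)) ν(i,i+1)` minus the value `−λ ∑_{l ≤ i} π(l) ψ(l)` prescribed by the
eigenvalue equation summed over `{1,…,i}`. Each truncated positive part raises it. -/
noncomputable def fluxDefect (π ν : ℕ → ℝ) (lam : ℝ) (ψ : ℕ → ℝ) (i : ℕ) : ℝ :=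
  (ψ (i + 1) - ψ i) * ν i + lam * piMean i π ψ

lemma piMean_succ (n : ℕ) (π f : ℕ → ℝ) :
    piMean (n + 1) π f = piMean n π f + f (n + 1) * π (n + 1) :=
  sum_Icc_succ_top (by omega) _

lemma sum_piMean_mul_sub (n : ℕ) (π f g : ℕ → ℝ) :
    ∑ i ∈ Icc 1 (n - 1), piMean i π f * (g (i + 1) - g i) =
      piMean n π f * g n - piMean n π (fun i => f i * g i) := by
  induction n with
  | zero => simp [piMean]
  | succ n ih =>
    cases n with
    | zero => simp [piMean, mul_right_comm]
    | succ n =>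
      simp only [Nat.add_sub_cancel] at ih ⊢
      rw [sum_Icc_succ_top (by omega), ih, piMean_succ (n + 1), piMean_succ (n + 1)]
      ring

lemma EForm_eq_add_sum_fluxDefect (n : ℕ) (π ν ψ g : ℕ → ℝ) (lam : ℝ) :
    EForm n ν ψ g =
      lam * (weightedCov (Icc 1 n) π ψ g - piMean n π ψ * (g n - piMean n π g)) +
        ∑ i ∈ Icc 1 (n - 1), fluxDefect π ν lam ψ i * (g (i + 1) - g i) := by
  have hcov : weightedCov (Icc 1 n) π ψ g =
      piMean n π (fun i => ψ i * g i) - piMean n π ψ * piMean n π g := rfl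
  have hsplit : ∑ i ∈ Icc 1 (n - 1), fluxDefect π ν lam ψ i * (g (i + 1) - g i) =
      EForm n ν ψ g + lam * ∑ i ∈ Icc 1 (n - 1), piMean i π ψ * (g (i + 1) - g i) := by
    rw [EForm, mul_sum, ← sum_add_distrib]
    exact sum_congr rfl fun i _ => by rw [fluxDefect]; ring
  rw [hsplit, sum_piMean_mul_sub, hcov]
  ring

end FluxDefect

namespace PosPartRec

variable {n : ℕ} {π ν ψ : ℕ → ℝ} {lam gap : ℝ}

lemma flux_succ (h : PosPartRec n π ν lam ψ) (hν : ∀ i ∈ Icc 1 (n - 1), 0 < ν i) {i : ℕ}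
    (hi : i + 1 < n) :
    (ψ (i + 2) - ψ (i + 1)) * ν (i + 1) =
      max ((ψ (i + 1) - ψ i) * ν i - lam * (π (i + 1) * ψ (i + 1))) 0 := by
  have hνi : ν (i + 1) ≠ 0 := (hν (i + 1) (mem_Icc.2 ⟨by omega, by omega⟩)).ne'
  rw [h (i + 1) (by omega) hi, add_sub_cancel_left, div_mul_cancel₀ _ hνi, Nat.add_sub_cancel]

lemma flux_nonneg (h : PosPartRec n π ν lam ψ) (hν : ∀ i ∈ Icc 1 (n - 1), 0 < ν i)
    (hν0 : ν 0 = 0) {i : ℕ} (hi : i < n) : 0 ≤ (ψ (i + 1) - ψ i) * ν i := by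
  cases i with
  | zero => rw [hν0, mul_zero]
  | succ i => exact h.flux_succ hν hi ▸ le_max_right _ _

lemma monotoneOn (h : PosPartRec n π ν lam ψ) (hν : ∀ i ∈ Icc 1 (n - 1), 0 < ν i) :
    MonotoneOn ψ (Icc 1 n) := by
  rw [coe_Icc]
  refine monotoneOn_of_le_add_one Set.ordConnected_Icc fun i _ hi hi' => ?_
  rw [h i hi.1 hi'.2]
  exact le_add_of_nonneg_right <| div_nonneg (le_max_right _ _)
    (hν i (mem_Icc.2 ⟨hi.1, Nat.le_sub_one_of_lt hi'.2⟩)).le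

lemma apply_one_lt_apply_two (h : PosPartRec n π ν lam ψ) (hn : 2 ≤ n) (hπ : 0 < π 1)
    (hν : 0 < ν 1) (hν0 : ν 0 = 0) (hlam : 0 < lam) (hψ : ψ 1 < 0) : ψ 1 < ψ 2 := by
  have hflux : 0 < (ψ 1 - ψ 0) * ν 0 - lam * (π 1 * ψ 1) := by
    rw [hν0, mul_zero, zero_sub, neg_pos]
    exact mul_neg_of_pos_of_neg hlam (mul_neg_of_pos_of_neg hπ hψ)
  rw [h 1 le_rfl hn]
  exact lt_add_of_pos_right _ (div_pos (lt_max_of_lt_left hflux) hν)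

lemma nonconstant (h : PosPartRec n π ν lam ψ) (hn : 2 ≤ n) (hπ : 0 < π 1) (hν : 0 < ν 1)
    (hν0 : ν 0 = 0) (hlam : 0 < lam) (hψ : ψ 1 < 0) : Nonconstant n ψ :=
  ⟨1, mem_Icc.2 ⟨le_rfl, by omega⟩, 2, mem_Icc.2 ⟨by omega, hn⟩,
    (h.apply_one_lt_apply_two hn hπ hν hν0 hlam hψ).ne⟩

lemma rayleigh_pos (h : PosPartRec n π ν lam ψ) (hn : 2 ≤ n) (hπ : ∀ i ∈ Icc 1 n, 0 < π i)
    (hπ1 : ∑ i ∈ Icc 1 n, π i = 1) (hν : ∀ i ∈ Icc 1 (n - 1), 0 < ν i) (hν0 : ν 0 = 0)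
    (hlam : 0 < lam) (hψ : ψ 1 < 0) : 0 < EForm n ν ψ ψ / varPi n π ψ := by
  have h1 : 1 ∈ Icc 1 (n - 1) := mem_Icc.2 ⟨le_rfl, by omega⟩
  have hπ_one : 0 < π 1 := hπ 1 (left_mem_Icc.2 (by omega))
  have hlt : ψ 1 < ψ 2 := h.apply_one_lt_apply_two hn hπ_one (hν 1 h1) hν0 hlam hψ
  have hnc : Nonconstant n ψ := h.nonconstant hn hπ_one (hν 1 h1) hν0 hlam hψ
  exact div_pos (EForm_self_pos hν h1 hlt.ne) ((varPi_pos_iff hπ hπ1).2 hnc)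

lemma fluxDefect_succ (h : PosPartRec n π ν lam ψ) (hν : ∀ i ∈ Icc 1 (n - 1), 0 < ν i) {i : ℕ}
    (hi : i + 1 < n) :
    fluxDefect π ν lam ψ (i + 1) = fluxDefect π ν lam ψ i +
      (max ((ψ (i + 1) - ψ i) * ν i - lam * (π (i + 1) * ψ (i + 1))) 0 -
        ((ψ (i + 1) - ψ i) * ν i - lam * (π (i + 1) * ψ (i + 1)))) := by
  rw [fluxDefect, fluxDefect, piMean_succ, h.flux_succ hν hi]
  ring

lemma fluxDefect_nonneg (h : PosPartRec n π ν lam ψ) (hν : ∀ i ∈ Icc 1 (n - 1), 0 < ν i)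
    (hν0 : ν 0 = 0) {i : ℕ} (hi : i < n) : 0 ≤ fluxDefect π ν lam ψ i := by
  induction i with
  | zero => simp [fluxDefect, piMean, hν0]
  | succ i ih =>
    rw [h.fluxDefect_succ hν hi]
    exact add_nonneg (ih (by omega)) (sub_nonneg.2 (le_max_left _ _))

/- Once a positive part is truncated, `ψ` is constant and nonnegative from there on, so that every
later positive part is truncated too. -/
lemma fluxDefect_eq_zero_or (h : PosPartRec n π ν lam ψ) (hπ : ∀ i ∈ Icc 1 n, 0 < π i)
    (hν : ∀ i ∈ Icc 1 (n - 1), 0 < ν i) (hν0 : ν 0 = 0) (hlam : 0 < lam) {i : ℕ} (hi : i < n) :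
    fluxDefect π ν lam ψ i = 0 ∨ (ψ (i + 1) = ψ i ∧ 0 ≤ ψ i) := by
  induction i with
  | zero => simp [fluxDefect, piMean, hν0]
  | succ i ih =>
    have hπi : 0 < lam * π (i + 1) := mul_pos hlam (hπ _ (mem_Icc.2 ⟨by omega, by omega⟩))
    have hνi : ν (i + 1) ≠ 0 := (hν _ (mem_Icc.2 ⟨by omega, by omega⟩)).ne'
    obtain htrunc | hkeep :=
      le_or_gt ((ψ (i + 1) - ψ i) * ν i - lam * (π (i + 1) * ψ (i + 1))) 0
    · right
      have hflux := h.flux_succ hν hi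
      rw [max_eq_right htrunc] at hflux
      refine ⟨sub_eq_zero.1 ((mul_eq_zero_iff_right hνi).1 hflux), ?_⟩
      refine nonneg_of_mul_nonneg_right (?_ : 0 ≤ lam * π (i + 1) * ψ (i + 1)) hπi
      linarith [h.flux_nonneg hν hν0 (Nat.lt_of_succ_lt hi)]
    · left
      rw [h.fluxDefect_succ hν hi, max_eq_left hkeep.le, sub_self, add_zero]
      refine (ih (Nat.lt_of_succ_lt hi)).resolve_right ?_
      rintro ⟨heq, hψ⟩
      rw [heq, sub_self, zero_mul, zero_sub, neg_pos, ← mul_assoc] at hkeep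
      exact hkeep.not_ge (mul_nonneg hπi.le hψ)

lemma fluxDefect_mul_sub_eq_zero (h : PosPartRec n π ν lam ψ) (hπ : ∀ i ∈ Icc 1 n, 0 < π i)
    (hν : ∀ i ∈ Icc 1 (n - 1), 0 < ν i) (hν0 : ν 0 = 0) (hlam : 0 < lam) {i : ℕ} (hi : i < n) :
    fluxDefect π ν lam ψ i * (ψ (i + 1) - ψ i) = 0 := by
  obtain h0 | ⟨heq, -⟩ := h.fluxDefect_eq_zero_or hπ hν hν0 hlam hi
  · rw [h0, zero_mul]
  · rw [heq, sub_self, mul_zero]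

lemma EForm_self_eq (h : PosPartRec n π ν lam ψ) (hπ : ∀ i ∈ Icc 1 n, 0 < π i)
    (hν : ∀ i ∈ Icc 1 (n - 1), 0 < ν i) (hν0 : ν 0 = 0) (hlam : 0 < lam) :
    EForm n ν ψ ψ = lam * (varPi n π ψ - piMean n π ψ * (ψ n - piMean n π ψ)) := by
  rw [EForm_eq_add_sum_fluxDefect n π ν ψ ψ lam, varPi_eq_weightedCov, add_eq_left]
  refine sum_eq_zero fun i hi => h.fluxDefect_mul_sub_eq_zero hπ hν hν0 hlam ?_
  have := mem_Icc.1 hi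
  omega

lemma le_EForm_of_monotone (h : PosPartRec n π ν lam ψ) (hν : ∀ i ∈ Icc 1 (n - 1), 0 < ν i)
    (hν0 : ν 0 = 0) {φ : ℕ → ℝ} (hφ : Monotone φ) :
    lam * (weightedCov (Icc 1 n) π ψ φ - piMean n π ψ * (φ n - piMean n π φ)) ≤ EForm n ν ψ φ := by
  rw [EForm_eq_add_sum_fluxDefect n π ν ψ φ lam]
  refine le_add_of_nonneg_right (sum_nonneg fun i hi => ?_)
  have := mem_Icc.1 hi
  exact mul_nonneg (h.fluxDefect_nonneg hν hν0 (by omega)) (sub_nonneg.2 (hφ i.le_succ))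

lemma mul_sub_le_mul_piMean (h : PosPartRec n π ν lam ψ) (hn : 1 ≤ n)
    (hπ : ∀ i ∈ Icc 1 n, 0 < π i) (hπ1 : ∑ i ∈ Icc 1 n, π i = 1)
    (hν : ∀ i ∈ Icc 1 (n - 1), 0 < ν i) (hν0 : ν 0 = 0) (hgap : IsSpectralGap n π ν gap)
    (hle : gap ≤ lam) :
    π 1 * π n * (lam - gap) * (ψ n - ψ 1) ≤ lam * piMean n π ψ := by
  have hπ0 : ∀ i ∈ Icc 1 n, 0 ≤ π i := fun i hi => (hπ i hi).le
  have hν' : ∀ i ∈ Icc 1 (n - 1), 0 ≤ ν i := fun i hi => (hν i hi).le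
  have h1 : 1 ∈ Icc 1 n := left_mem_Icc.2 hn
  have hnn : n ∈ Icc 1 n := right_mem_Icc.2 hn
  obtain ⟨φ, hφ, hvar, hmin⟩ := hgap.exists_monotone_minimizer hπ hπ1 hν'
  have hφ_mem : ∀ i ∈ Icc 1 n, φ i ∈ Set.Icc (φ 1) (φ n) := fun i hi =>
    ⟨hφ (mem_Icc.1 hi).1, hφ (mem_Icc.1 hi).2⟩
  have hmean : piMean n π φ ∈ Set.Icc (φ 1) (φ n) := weightedMean_mem_Icc hπ0 hπ1 hφ_mem
  have hφn : 0 < φ n - piMean n π φ := by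
    rw [varPi_eq_weightedCov] at hvar
    exact pos_of_mul_pos_left (hvar.trans_le (weightedCov_self_le_mul hπ0 hπ1 hφ_mem))
      (sub_nonneg.2 hmean.1)
  have hψ : 0 ≤ ψ n - ψ 1 := sub_nonneg.2 (h.monotoneOn hν h1 hnn hn)
  have hcov : (ψ n - ψ 1) * (φ n - piMean n π φ) * (π n * π 1) ≤
      weightedCov (Icc 1 n) π ψ φ :=
    calc _ ≤ (ψ n - ψ 1) * (φ n - φ 1) * (π n * π 1) := by
          have := mul_pos (hπ n hnn) (hπ 1 h1)
          gcongr
          exact hmean.1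
      _ ≤ _ := mul_le_weightedCov_of_monovaryOn hπ0 hπ1
          ((h.monotoneOn hν).monovaryOn (hφ.monotoneOn _)) hnn h1
  have henergy := h.le_EForm_of_monotone (π := π) hν hν0 hφ
  rw [hgap.EForm_eq_mul_weightedCov hπ hπ1 hν' hmin] at henergy
  refine le_of_mul_le_mul_right ?_ hφn
  calc _ = (lam - gap) * ((ψ n - ψ 1) * (φ n - piMean n π φ) * (π n * π 1)) := by ring
    _ ≤ (lam - gap) * weightedCov (Icc 1 n) π ψ φ :=
      mul_le_mul_of_nonneg_left hcov (sub_nonneg.2 hle)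
    _ ≤ lam * piMean n π ψ * (φ n - piMean n π φ) := by linarith

theorem rayleigh_sub_gap_le (h : PosPartRec n π ν lam ψ) (hn : 1 ≤ n)
    (hπ : ∀ i ∈ Icc 1 n, 0 < π i) (hπ1 : ∑ i ∈ Icc 1 n, π i = 1)
    (hν : ∀ i ∈ Icc 1 (n - 1), 0 < ν i) (hν0 : ν 0 = 0) (hgap : IsSpectralGap n π ν gap)
    (hlam : 0 < lam) (hle : gap ≤ lam) (hvar : 0 < varPi n π ψ) :
    EForm n ν ψ ψ / varPi n π ψ - gap ≤ (1 - π 1 * π n) * (lam - gap) := by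
  have hπ0 : ∀ i ∈ Icc 1 n, 0 ≤ π i := fun i hi => (hπ i hi).le
  have h1 : 1 ∈ Icc 1 n := left_mem_Icc.2 hn
  have hnn : n ∈ Icc 1 n := right_mem_Icc.2 hn
  have hψ_mem : ∀ i ∈ Icc 1 n, ψ i ∈ Set.Icc (ψ 1) (ψ n) := fun i hi =>
    ⟨h.monotoneOn hν h1 hi (mem_Icc.1 hi).1, h.monotoneOn hν hi hnn (mem_Icc.1 hi).2⟩
  have hmean : piMean n π ψ ∈ Set.Icc (ψ 1) (ψ n) := weightedMean_mem_Icc hπ0 hπ1 hψ_mem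
  have hvar_le : varPi n π ψ ≤ (ψ n - piMean n π ψ) * (ψ n - ψ 1) :=
    calc varPi n π ψ ≤ (ψ n - piMean n π ψ) * (piMean n π ψ - ψ 1) := by
          rw [varPi_eq_weightedCov]
          exact weightedCov_self_le_mul hπ0 hπ1 hψ_mem
      _ ≤ _ := mul_le_mul_of_nonneg_left (sub_le_sub_right hmean.2 _) (sub_nonneg.2 hmean.2)
  have hdrop : π 1 * π n * (lam - gap) * varPi n π ψ ≤
      lam * piMean n π ψ * (ψ n - piMean n π ψ) := by
    have hc : 0 ≤ π 1 * π n * (lam - gap) :=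
      mul_nonneg (mul_nonneg (hπ0 1 h1) (hπ0 n hnn)) (sub_nonneg.2 hle)
    calc _ ≤ π 1 * π n * (lam - gap) * ((ψ n - piMean n π ψ) * (ψ n - ψ 1)) :=
          mul_le_mul_of_nonneg_left hvar_le hc
      _ = π 1 * π n * (lam - gap) * (ψ n - ψ 1) * (ψ n - piMean n π ψ) := by ring
      _ ≤ _ := mul_le_mul_of_nonneg_right
          (h.mul_sub_le_mul_piMean hn hπ hπ1 hν hν0 hgap hle) (sub_nonneg.2 hmean.2)
  rw [sub_le_iff_le_add, div_le_iff₀ hvar, h.EForm_self_eq hπ hν hν0 hlam]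
  linarith

end PosPartRec

theorem stmt2 (n : ℕ) (hn : 2 ≤ n) (π ν : ℕ → ℝ)
    (hπ : ∀ i ∈ Finset.Icc 1 n, 0 < π i)
    (hπ1 : ∑ i ∈ Finset.Icc 1 n, π i = 1)
    (hν : ∀ i ∈ Finset.Icc 1 (n - 1), 0 < ν i)
    (hν0 : ν 0 = 0) (hνn : ν n = 0)
    (gap : ℝ) (hgap : IsSpectralGap n π ν gap) :
    ∃ σ : ℝ, 0 < σ ∧ σ < 1 ∧
      ∀ (a : ℝ), 0 < a →
      ∀ (lamSeq : ℕ → ℝ), 0 < lamSeq 0 →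
      ∀ (ψ : ℕ → ℕ → ℝ),
        (∀ k, ψ k 1 = -a) →
        (∀ k, PosPartRec n π ν (lamSeq k) (ψ k)) →
        (∀ k, lamSeq (k + 1) = EForm n ν (ψ k) (ψ k) / varPi n π (ψ k)) →
        ∀ k, 1 ≤ k →
          0 ≤ lamSeq k - gap ∧ lamSeq k - gap ≤ σ ^ (k - 1) * lamSeq 1 := by
  have h1 : 1 ∈ Icc 1 n := left_mem_Icc.2 (by omega)
  have hnn : n ∈ Icc 1 n := right_mem_Icc.2 (by omega)
  have hσ : 0 < 1 - π 1 * π n := sub_pos.2 (mul_lt_one_of_sum_eq_one hπ hπ1 h1 hnn (by omega))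
  refine ⟨1 - π 1 * π n, hσ, sub_lt_self _ (mul_pos (hπ 1 h1) (hπ n hnn)), ?_⟩
  intro a ha lamSeq hlam0 ψ hψ1 hrec hstep k hk
  have hψ (k : ℕ) : ψ k 1 < 0 := hψ1 k ▸ neg_neg_of_pos ha
  have hlam (k : ℕ) : 0 < lamSeq k := by
    induction k with
    | zero => exact hlam0
    | succ k ih => exact hstep k ▸ (hrec k).rayleigh_pos hn hπ hπ1 hν hν0 ih (hψ k)
  have hnc (k : ℕ) : Nonconstant n (ψ k) :=
    (hrec k).nonconstant hn (hπ 1 h1) (hν 1 (mem_Icc.2 ⟨le_rfl, by omega⟩)) hν0 (hlam k) (hψ k)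
  have hge (k : ℕ) : gap ≤ lamSeq (k + 1) := hgap.2 ⟨ψ k, hnc k, hstep k⟩
  obtain ⟨k, rfl⟩ := Nat.exists_eq_add_of_le' hk
  refine ⟨sub_nonneg.2 (hge k), ?_⟩
  calc lamSeq (k + 1) - gap ≤ (1 - π 1 * π n) ^ k * (lamSeq 1 - gap) :=
        le_geom (u := fun j => lamSeq (j + 1) - gap) hσ.le k fun j _ => hstep (j + 1) ▸
          (hrec _).rayleigh_sub_gap_le (by omega) hπ hπ1 hν hν0 hgap (hlam _) (hge j)
            ((varPi_pos_iff hπ hπ1).2 (hnc _))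
    _ ≤ (1 - π 1 * π n) ^ k * lamSeq 1 := mul_le_mul_of_nonneg_left
        (sub_le_self _ (hgap.nonneg hπ hπ1 fun i hi => (hν i hi).le)) (pow_nonneg hσ.le k)
end
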